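/- Let H be a graph of order k with nonincreasing degree sequence (h_1, …, h_k) and independence number α(H), and let π = (d_1, …, d_n) be a nonincreasing graphic sequence (with n ≥ k and all terms at least 1) that is NOT degree sufficient for H. Let j be the largest integer for which d_{k−j+1} < h_{k−j+1}. If j < α(H)+1, then π is ([k−α(H), k−j+1], 0)-close to the sequence π̃_{α(H)+1}(H,n); that is, the sequence obtained from π by replacing each of the terms d_{k−α(H)}, …, d_{k−j+1} by d_{k−j+1} is majorized by π̃_{α(H)+1}(H,n). -/

import Mathlib

/-!
Put `α = α(H)` and `i = α + 1`. The point is the inequality `h_{k-j+1} ≤ (k - i) + ∇_i(H)`.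
At least `k - j + 1` vertices of `H` have degree at least `h_{k-j+1}`, and `j ≤ α < i`, so every
set `S` of `i` vertices contains one of them, say `v` (`exists_mem_le_gdeg`). Choose `S` so that the
maximum degree of the induced subgraph is `∇_i(H)`; since `v` has at most `∇_i(H)` neighbours inside
`S` and at most `k - i` outside, the inequality follows (`le_sub_add_nablaDeg`).

Hence `d_{k-j+1} < h_{k-j+1}` gives `d_{k-j+1} ≤ (k - i) + ∇_i(H) - 1`. After leveling off, every
term from position `k - α` on is at most `d_{k-j+1}`, while each earlier term is a degree in a graph
on `n` vertices, so at most `n - 1`. The case `α = k` does not occur: there `H` has no edge, so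
every `h_l` is `0` and no `d_l` can be smaller.
-/

/-- The degree of a vertex, defined via `Set.ncard` of the neighbor set
(avoids decidability assumptions). -/
noncomputable def gdeg {V : Type*} (G : SimpleGraph V) (v : V) : ℕ :=
  (G.neighborSet v).ncard

/-- A sequence indexed by `Fin n` is graphic if some simple graph on `Fin n`
realizes it, vertex `v` having degree `d v`. -/
def IsGraphic {n : ℕ} (d : Fin n → ℕ) : Prop :=
  ∃ G : SimpleGraph (Fin n), ∀ v, gdeg G v = d v

/-- `h` is the degree sequence of `H` (up to relabelling of the vertices). -/
def HasDegSeq {k : ℕ} (H : SimpleGraph (Fin k)) (h : Fin k → ℕ) : Prop :=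
  ∃ σ : Equiv.Perm (Fin k), ∀ i, gdeg H (σ i) = h i

/-- `G` contains a copy of `H` as a subgraph. -/
def ContainsSub {V W : Type*} (G : SimpleGraph V) (H : SimpleGraph W) : Prop :=
  ∃ f : W → V, Function.Injective f ∧ ∀ ⦃u v : W⦄, H.Adj u v → G.Adj (f u) (f v)

/-- A graphic sequence `d` is potentially `H`-graphic if some realization of `d`
contains `H` as a subgraph. -/
def PotentiallyGraphic {n k : ℕ} (d : Fin n → ℕ) (H : SimpleGraph (Fin k)) : Prop :=
  ∃ G : SimpleGraph (Fin n), (∀ v, gdeg G v = d v) ∧ ContainsSub G H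

/-- The independence number α(H). -/
noncomputable def alphaNum {k : ℕ} (H : SimpleGraph (Fin k)) : ℕ :=
  sSup {m | ∃ s : Finset (Fin k), s.card = m ∧ ∀ u ∈ s, ∀ v ∈ s, ¬ H.Adj u v}

/-- The degree of `v` in the subgraph of `H` induced on `s`. -/
noncomputable def degOn {k : ℕ} (H : SimpleGraph (Fin k)) (s : Finset (Fin k)) (v : Fin k) : ℕ :=
  {u : Fin k | u ∈ s ∧ H.Adj v u}.ncard

/-- ∇_i(H) = min{Δ(F) : F an induced subgraph of H on i vertices}. -/
noncomputable def nablaDeg {k : ℕ} (H : SimpleGraph (Fin k)) (i : ℕ) : ℕ :=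
  sInf {m | ∃ s : Finset (Fin k), s.card = i ∧
    m = sSup {e | ∃ v ∈ s, e = degOn H s v}}

/-- π̃_i(H,n) = ((n−1)^{k−i}, (k−i+∇_i(H)−1)^{n−k+i}), as a function `Fin n → ℕ`. -/
noncomputable def tildePi {k : ℕ} (H : SimpleGraph (Fin k)) (i n : ℕ) : Fin n → ℕ :=
  fun t => if (t : ℕ) < k - i then n - 1 else k - i + nablaDeg H i - 1

/-- `s` majorizes `d` if `s` dominates `d` termwise. -/
def Majorizes {n : ℕ} (s d : Fin n → ℕ) : Prop := ∀ t, d t ≤ s t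

/-- Replace each of the terms in (1-based) positions `a1,…,a2` of `d`
by the term in position `a2`. -/
def levelOff {n : ℕ} (d : Fin n → ℕ) (a1 a2 : ℕ) : Fin n → ℕ :=
  fun t => if h : a2 - 1 < n ∧ a1 ≤ (t : ℕ) + 1 ∧ (t : ℕ) + 1 ≤ a2
    then d ⟨a2 - 1, h.1⟩ else d t

/-- `d` is ([a1,a2],b)-close to `s`: after leveling off positions `a1,…,a2` of `d`
and then subtracting a total of at most `b` from the terms, the resulting sequence
is majorized by `s`. -/
def CloseTo {n : ℕ} (d : Fin n → ℕ) (a1 a2 b : ℕ) (s : Fin n → ℕ) : Prop :=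
  ∃ e : Fin n → ℕ, (∀ t, e t ≤ levelOff d a1 a2 t) ∧
    (∑ t, e t) ≤ b ∧ ∀ t, levelOff d a1 a2 t - e t ≤ s t

/-- i*(H): the smallest index i in {α(H)+1,…,k} minimizing 2i − ∇_i(H). -/
noncomputable def istar {k : ℕ} (H : SimpleGraph (Fin k)) : ℕ :=
  sInf {i | alphaNum H + 1 ≤ i ∧ i ≤ k ∧
    ∀ l, alphaNum H + 1 ≤ l → l ≤ k → 2 * i - nablaDeg H i ≤ 2 * l - nablaDeg H l}

lemma gdeg_le_pred {n : ℕ} (G : SimpleGraph (Fin n)) (v : Fin n) : gdeg G v ≤ n - 1 := by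
  have h1 : G.neighborSet v ⊆ {v}ᶜ := by
    intro u hu hv
    rw [Set.mem_singleton_iff] at hv
    subst hv
    exact G.loopless.irrefl _ hu
  calc gdeg G v ≤ ({v}ᶜ : Set (Fin n)).ncard := Set.ncard_le_ncard h1
    _ = n - 1 := by rw [Set.ncard_compl]; simp

/-- Neighbours of `v` lie in `S` or in its complement, which has `k - |S|` elements. -/
lemma gdeg_le_degOn_add {k : ℕ} (H : SimpleGraph (Fin k)) (S : Finset (Fin k)) (v : Fin k) :
    gdeg H v ≤ k - S.card + degOn H S v := by
  have h1 : H.neighborSet v ⊆ (↑Sᶜ : Set (Fin k)) ∪ {u | u ∈ S ∧ H.Adj v u} := by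
    intro u hu
    by_cases hS : u ∈ S
    · exact Or.inr ⟨hS, hu⟩
    · exact Or.inl (by simpa using hS)
  calc gdeg H v ≤ _ := Set.ncard_le_ncard h1
    _ ≤ _ := Set.ncard_union_le _ _
    _ = _ := by rw [Set.ncard_coe_finset, Finset.card_compl, Fintype.card_fin]; rfl

/-- The supremum in the definition of `nablaDeg` is attained by some `i`-set when `i ≤ k`, and
bounds every degree in the corresponding induced subgraph. -/
lemma exists_card_degOn_le_nablaDeg {k i : ℕ} (H : SimpleGraph (Fin k)) (hi : i ≤ k) :
    ∃ S : Finset (Fin k), S.card = i ∧ ∀ v ∈ S, degOn H S v ≤ nablaDeg H i := by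
  obtain ⟨S, hS, hm⟩ := Nat.sInf_mem (s := {m | ∃ s : Finset (Fin k), s.card = i ∧
      m = sSup {e | ∃ v ∈ s, e = degOn H s v}}) (by
    obtain ⟨s, -, hs⟩ := Finset.exists_subset_card_eq
      (s := (Finset.univ : Finset (Fin k))) (n := i) (by simpa using hi)
    exact ⟨_, s, hs, rfl⟩)
  refine ⟨S, hS, fun v hv => ?_⟩
  unfold nablaDeg
  rw [hm]
  refine le_csSup ⟨k, ?_⟩ ⟨v, hv, rfl⟩
  rintro _ ⟨u, -, rfl⟩
  exact (Set.ncard_le_card _).trans (by simp)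

/-- If `H` has an edge, then its independence number is less than its order. -/
lemma alphaNum_lt {k : ℕ} (H : SimpleGraph (Fin k)) {v : Fin k} (hv : 0 < gdeg H v) :
    alphaNum H < k := by
  obtain ⟨s, hs, hind⟩ := Nat.sSup_mem
    (s := {m | ∃ s : Finset (Fin k), s.card = m ∧ ∀ u ∈ s, ∀ v ∈ s, ¬ H.Adj u v})
    ⟨0, ∅, by simp⟩ ⟨k, by
      rintro _ ⟨s, rfl, -⟩
      simpa using s.card_le_univ⟩
  change s.card = alphaNum H at hs
  obtain ⟨u, hu⟩ := (Set.ncard_pos).1 hv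
  by_contra hlt
  have huniv : s = Finset.univ := by
    rw [← Finset.card_eq_iff_eq_univ]
    have := s.card_le_univ
    simp only [Fintype.card_fin] at this ⊢
    omega
  subst huniv
  exact hind v (Finset.mem_univ _) u (Finset.mem_univ _) hu

/-- Pigeonhole: the first `m + 1` terms of the degree sequence belong to `m + 1` vertices of
degree at least `h m`, too many to avoid a set `S` with more than `k - (m + 1)` elements. -/
lemma exists_mem_le_gdeg {k : ℕ} {H : SimpleGraph (Fin k)} {h : Fin k → ℕ} (hmono : Antitone h)
    (hdeg : HasDegSeq H h) (m : Fin k) (S : Finset (Fin k)) (hS : k < S.card + (m + 1)) :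
    ∃ v ∈ S, h m ≤ gdeg H v := by
  obtain ⟨σ, hσ⟩ := hdeg
  have hcard : ((Finset.Iic m).map σ.toEmbedding).card = m + 1 := by simp
  have hne : (S ∩ (Finset.Iic m).map σ.toEmbedding).Nonempty := by
    refine Finset.inter_nonempty_of_card_lt_card_add_card
      (Finset.subset_univ _) (Finset.subset_univ _) ?_
    rw [hcard]
    simpa using hS
  obtain ⟨v, hv⟩ := hne
  obtain ⟨hvS, hv⟩ := Finset.mem_inter.1 hv
  obtain ⟨l, hl, rfl⟩ := Finset.mem_map.1 hv
  refine ⟨_, hvS, ?_⟩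
  have := hmono (Finset.mem_Iic.1 hl)
  simpa [hσ] using this

lemma le_sub_add_nablaDeg {k i : ℕ} {H : SimpleGraph (Fin k)} {h : Fin k → ℕ}
    (hmono : Antitone h) (hdeg : HasDegSeq H h) (m : Fin k) (hi : i ≤ k) (hm : k < i + (m + 1)) :
    h m ≤ k - i + nablaDeg H i := by
  obtain ⟨S, rfl, hS⟩ := exists_card_degOn_le_nablaDeg H hi
  obtain ⟨v, hv, hle⟩ := exists_mem_le_gdeg hmono hdeg m S hm
  have h1 := gdeg_le_degOn_add H S v
  have h2 := hS v hv
  omega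

/-- If π is a graphic sequence that is not degree sufficient for H, and
j is the largest integer with d_{k-j+1} < h_{k-j+1}, and j < α(H)+1, then π is
([k-α(H), k-j+1], 0)-close to π̃_{α(H)+1}(H,n): the sequence obtained by replacing
terms in positions k-α(H),…,k-j+1 by the (k-j+1)-st term is majorized by
π̃_{α(H)+1}(H,n). -/
theorem stmt_1 {k n : ℕ} (hk : 1 ≤ k) (hkn : k ≤ n)
    (H : SimpleGraph (Fin k)) (h : Fin k → ℕ) (hmono : Antitone h)
    (hdeg : HasDegSeq H h)
    (d : Fin n → ℕ) (dmono : Antitone d) (dpos : ∀ t, 1 ≤ d t)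
    (dgr : IsGraphic d)
    (hnds : ¬ ∀ i : Fin k, h i ≤ d (Fin.castLE hkn i))
    (j : ℕ) (hj1 : 1 ≤ j) (hjk : j ≤ k)
    (hjfail : d ⟨k - j, by omega⟩ < h ⟨k - j, by omega⟩)
    (hjmax : ∀ j' (_ : j < j') (_ : j' ≤ k),
      h ⟨k - j', by omega⟩ ≤ d ⟨k - j', by omega⟩)
    (hja : j < alphaNum H + 1) :
    Majorizes (tildePi H (alphaNum H + 1) n)
      (levelOff d (k - alphaNum H) (k - j + 1)) := by
  have hα : alphaNum H < k := by
    obtain ⟨σ, hσ⟩ := hdeg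
    exact alphaNum_lt H (v := σ ⟨k - j, by omega⟩) (by rw [hσ]; omega)
  have hkey := le_sub_add_nablaDeg (i := alphaNum H + 1) hmono hdeg ⟨k - j, by omega⟩ hα
    (by simp only; omega)
  intro t
  have hlt : d t ≤ n - 1 := by
    obtain ⟨G, hG⟩ := dgr
    exact hG t ▸ gdeg_le_pred G t
  unfold levelOff tildePi
  by_cases ht : (t : ℕ) < k - (alphaNum H + 1)
  · rw [if_pos ht, dif_neg (by omega)]
    exact hlt
  · rw [if_neg ht]
    split_ifs with hc
    · simp only [Nat.add_sub_cancel]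
      omega
    · -- `t` lies beyond the leveled block, where `d` is already at most its `(k-j+1)`-st term.
      have hle : d t ≤ d ⟨k - j, by omega⟩ := dmono (by rw [Fin.le_def]; simp only; omega)
      omega
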